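/- arXiv:2603.17098 — 4 statements merged into one kernel-verified Lean document; each statement's English description precedes it below -/
import Mathlib

section
/- (Theorem 1: shift invariance of the max-centered dGHM matrix.) Let M ≥ 2 be an integer, let Q be any M×M real matrix, and let F be an M×M real matrix, all indexed cyclically by ZMod M. Suppose F attains its maximal value at a unique position (r_max, c_max) (row r_max, column c_max), and define the max-centered dGHM matrix A*_max(F) = A*_{c_max, r_max}(F), where the pivot of any matrix with a unique maximal entry is the (column, row) position of that entry. Then for all c, r in ZMod M, A*_max(F^{[c,r]}) = A*_max(F); that is, the operator A*_max is invariant under arbitrary wrap-shifts of the input. -/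
/-!
The unique maximum of the shifted matrix sits at the shifted position, so the pivot moves by
`(c, r)` together with `F` (`IsUniqueMax.wrapShift`, `IsUniqueMax.unique`). Each entry of the triple
product is a double sum over `ZMod M`, and translating the two summation indices by `r` and `c`
absorbs the shift (`dGHM_wrapShift`).
-/

open Matrix

/-- The wrap-shift of an `M × M` matrix `F` (indexed cyclically by `ZMod M`)
by `(c, r)`: columns are shifted cyclically by `c` and rows by `r`, i.e.
`F^{[c,r]} (i, j) = F (i - r, j - c)`. -/
def wrapShift {M : ℕ} {α : Type*} (F : Matrix (ZMod M) (ZMod M) α) (c r : ZMod M) :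
    Matrix (ZMod M) (ZMod M) α :=
  fun i j => F (i - r) (j - c)

/-- The pivoted dGHM matrix of `F` for pivot position `(c, r)`:
`A*_{c,r}(F) = (4 / (M-1)^2) • Q^{[r,0]} * F * (Qᵀ)^{[0,c]}`. -/
noncomputable def dGHM {M : ℕ} [NeZero M] (Q : Matrix (ZMod M) (ZMod M) ℝ)
    (c r : ZMod M) (F : Matrix (ZMod M) (ZMod M) ℝ) : Matrix (ZMod M) (ZMod M) ℝ :=
  (4 / ((M : ℝ) - 1) ^ 2) • (wrapShift Q r 0 * F * wrapShift Qᵀ 0 c)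

/-- `F` attains its maximal value at the unique position `(i₀, j₀)`
(row `i₀`, column `j₀`). -/
def IsUniqueMax {M : ℕ} (F : Matrix (ZMod M) (ZMod M) ℝ) (i₀ j₀ : ZMod M) : Prop :=
  ∀ i j : ZMod M, (i, j) ≠ (i₀, j₀) → F i j < F i₀ j₀

lemma IsUniqueMax.wrapShift {M : ℕ} {F : Matrix (ZMod M) (ZMod M) ℝ} {i₀ j₀ : ZMod M}
    (h : IsUniqueMax F i₀ j₀) (c r : ZMod M) :
    IsUniqueMax (wrapShift F c r) (i₀ + r) (j₀ + c) := by
  intro i j hij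
  simp only [_root_.wrapShift, add_sub_cancel_right]
  refine h _ _ fun he => hij ?_
  simpa only [Prod.mk.injEq, sub_eq_iff_eq_add] using he

lemma IsUniqueMax.unique {M : ℕ} {F : Matrix (ZMod M) (ZMod M) ℝ} {i₀ j₀ i₁ j₁ : ZMod M}
    (h₀ : IsUniqueMax F i₀ j₀) (h₁ : IsUniqueMax F i₁ j₁) : i₀ = i₁ ∧ j₀ = j₁ := by
  by_contra hne
  have hne' : (i₀, j₀) ≠ (i₁, j₁) := by simpa only [ne_eq, Prod.mk.injEq] using hne
  exact lt_asymm (h₁ _ _ hne') (h₀ _ _ hne'.symm)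

/-- Shifting the input and its pivot together leaves the dGHM matrix unchanged, whether or not the
pivot is a maximum. -/
lemma dGHM_wrapShift {M : ℕ} [NeZero M] (Q F : Matrix (ZMod M) (ZMod M) ℝ) (c r c₀ r₀ : ZMod M) :
    dGHM Q (c₀ + c) (r₀ + r) (wrapShift F c r) = dGHM Q c₀ r₀ F := by
  unfold dGHM
  congr 1
  ext i j
  simp only [Matrix.mul_apply, wrapShift]
  refine (Fintype.sum_equiv (Equiv.addRight c) _ _ fun l => ?_).symm
  simp only [Equiv.coe_addRight, add_sub_cancel_right, add_sub_add_right_eq_sub]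
  congr 1
  refine Fintype.sum_equiv (Equiv.addRight r) _ _ fun k => ?_
  simp only [Equiv.coe_addRight, add_sub_cancel_right, add_sub_add_right_eq_sub]

/-- Theorem 1: the max-centered dGHM matrix `A*_max` is invariant under arbitrary
wrap-shifts of the input.  Here the max-centered dGHM matrix of a matrix with a
unique maximal entry at row `i₀`, column `j₀` is `A*_{j₀, i₀}`, i.e. its pivot
is the (column, row) position of the unique maximal entry. -/
theorem dGHM_maxCentered_shift_invariant {M : ℕ} [NeZero M] (hM : 2 ≤ M)
    (Q F : Matrix (ZMod M) (ZMod M) ℝ) (rmax cmax : ZMod M)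
    (hF : IsUniqueMax F rmax cmax)
    (c r : ZMod M) (r' c' : ZMod M)
    (hF' : IsUniqueMax (wrapShift F c r) r' c') :
    dGHM Q c' r' (wrapShift F c r) = dGHM Q cmax rmax F := by
  obtain ⟨rfl, rfl⟩ := (hF.wrapShift c r).unique hF'
  exact dGHM_wrapShift Q F c r cmax rmax
end

section
/- (Theorem 2: shift invariance of the max-centered reconstruction.) Let M ≥ 2 be an integer, let Q be any M×M real matrix, and let F be an M×M real matrix, all indexed cyclically by ZMod M, such that F attains its maximal value at a unique position, and such that for every c, r in ZMod M the wrap-shifted matrix F^{[c,r]} also attains its maximal value at a unique position. Define the reconstruction operator F̂*(F) = Qᵀ · A*_max(F) · Q. Then for all c, r in ZMod M, F̂*(F^{[c,r]}) = F̂*(F); that is, the reconstruction F̂* is invariant under arbitrary wrap-shifts of the input. -/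
/-!
Wrap-shifting `F` by `(c, r)` moves its unique maximum from `(i₀, j₀)` to `(i₀ + r, j₀ + c)`
(`isUniqueMax_wrapShift`), so the pivot moves by the same amount. Shifting pivot and input
together only translates the summation indices in `Q^{[r,0]} F (Qᵀ)^{[0,c]}`
(`dGHM_wrapShift`), so the max-centered dGHM matrix itself, and hence the reconstruction,
is unchanged.
-/

open Matrix

/-- The unique maximum moves along with the shift: otherwise the entries of `F` at
`(rmax, cmax)` and `(r' - r, c' - c)` would each be strictly smaller than the other. -/
lemma isUniqueMax_wrapShift {M : ℕ} {F : Matrix (ZMod M) (ZMod M) ℝ}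
    {rmax cmax c r r' c' : ZMod M} (hF : IsUniqueMax F rmax cmax)
    (hF' : IsUniqueMax (wrapShift F c r) r' c') : r' = rmax + r ∧ c' = cmax + c := by
  by_contra hne
  have h₁ := hF (r' - r) (c' - c) fun h => hne <| by
    simpa [Prod.ext_iff, sub_eq_iff_eq_add] using h
  have h₂ := hF' (rmax + r) (cmax + c) fun h => hne <| by
    simpa [Prod.ext_iff, eq_comm] using h
  simp only [wrapShift, add_sub_cancel_right] at h₂
  exact lt_asymm h₁ h₂

/-- Theorem 2: the max-centered reconstruction `F̂*(F) = Qᵀ * A*_max(F) * Q` is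
invariant under arbitrary wrap-shifts of the input.  The max-centered dGHM matrix
of a matrix with a unique maximal entry at row `i₀`, column `j₀` is `A*_{j₀, i₀}`. -/
theorem reconstruction_shift_invariant {M : ℕ} [NeZero M] (hM : 2 ≤ M)
    (Q F : Matrix (ZMod M) (ZMod M) ℝ) (rmax cmax : ZMod M)
    (hF : IsUniqueMax F rmax cmax)
    (c r : ZMod M) (r' c' : ZMod M)
    (hF' : IsUniqueMax (wrapShift F c r) r' c') :
    Qᵀ * dGHM Q c' r' (wrapShift F c r) * Q = Qᵀ * dGHM Q cmax rmax F * Q := by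
  obtain ⟨rfl, rfl⟩ := isUniqueMax_wrapShift hF hF'
  rw [dGHM_wrapShift]
end

section
/- Let M ≥ 2 be an integer and let Q be an M×M real orthogonal matrix (QᵀQ = I), with all matrices indexed cyclically by ZMod M. Then for every M×M real matrix F and every pivot (c,r) ∈ ZMod M × ZMod M, the reconstruction from the pivoted dGHM matrix recovers a wrap-shifted, rescaled copy of the input: Qᵀ · A*_{c,r}(F) · Q = (4/(M−1)²) · F^{[−c, −r]}. -/
/-!
The scalar factors out, leaving `(Qᵀ * Q^{[r,0]}) * F * ((Qᵀ)^{[0,c]} * Q)`. Orthogonality turns the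
two outer factors into cyclic permutation matrices, which shift the rows of `F` by `-r` and its
columns by `-c`.
-/

open Matrix

/-- Only the column index of `Q^{[r,0]}` is shifted, so `Qᵀ * Q^{[r,0]}` is the identity with its
columns shifted by `r`: the permutation matrix with a `1` at `(i, i + r)`. -/
lemma transpose_mul_wrapShift {M : ℕ} [NeZero M] {Q : Matrix (ZMod M) (ZMod M) ℝ}
    (hQ : Qᵀ * Q = 1) (r : ZMod M) : Qᵀ * wrapShift Q r 0 = wrapShift 1 r 0 := by
  rw [← hQ]
  ext i j
  simp [wrapShift, Matrix.mul_apply]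

lemma wrapShift_transpose_mul {M : ℕ} [NeZero M] {Q : Matrix (ZMod M) (ZMod M) ℝ}
    (hQ : Qᵀ * Q = 1) (c : ZMod M) : wrapShift Qᵀ 0 c * Q = wrapShift 1 0 c := by
  rw [← hQ]
  ext i j
  simp [wrapShift, Matrix.mul_apply]

lemma wrapShift_one_mul_mul {M : ℕ} [NeZero M] (F : Matrix (ZMod M) (ZMod M) ℝ) (c r : ZMod M) :
    wrapShift 1 r 0 * F * wrapShift 1 0 c = wrapShift F (-c) (-r) := by
  ext i j
  simp [wrapShift, Matrix.mul_apply, Matrix.one_apply, eq_sub_iff_add_eq, sub_eq_iff_eq_add]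

/-- If `Q` is orthogonal, reconstruction from the pivoted dGHM matrix recovers a
wrap-shifted, rescaled copy of the input. -/
theorem reconstruction_of_orthogonal {M : ℕ} [NeZero M] (hM : 2 ≤ M)
    (Q : Matrix (ZMod M) (ZMod M) ℝ) (hQ : Qᵀ * Q = 1)
    (F : Matrix (ZMod M) (ZMod M) ℝ) (c r : ZMod M) :
    Qᵀ * dGHM Q c r F * Q = (4 / ((M : ℝ) - 1) ^ 2) • wrapShift F (-c) (-r) := by
  rw [← wrapShift_one_mul_mul, ← transpose_mul_wrapShift hQ, ← wrapShift_transpose_mul hQ, dGHM]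
  simp only [Matrix.mul_smul, Matrix.smul_mul, Matrix.mul_assoc]
end

section
/- (Orthogonality of physicists' Hermite polynomials with Gaussian weight.) For all natural numbers p and q, ∫_ℝ H_p(x) · H_q(x) · exp(−x²) dx = 2^p · p! · √π if p = q, and 0 if p ≠ q, where H_p is the physicists' Hermite polynomial of order p. -/
/-!
Each `hermiteH p` is the evaluation of a polynomial `P p` with `P 0 = 1` and
`P (n + 1) = 2 X P n - (P n)'`, because `(P n · exp(-x²))' = -P (n + 1) · exp(-x²)`. Integrating
this identity by parts against any polynomial `f` gives
`∫ f · P (n + 1) · exp(-x²) = ∫ f' · P n · exp(-x²)`; there are no boundary terms, since a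
polynomial times the Gaussian is integrable. Combined with `(P (n + 1))' = 2 (n + 1) P n`, this
shows that the pairing `I p q` of `P p` and `P q` satisfies `I (p + 1) (q + 1) = 2 (p + 1) I p q`
and `I 0 (q + 1) = 0`, which reduces everything to the Gaussian integral `I 0 0 = √π`.
-/

open Real MeasureTheory

/-- The physicists' Hermite polynomial of order `p`, via the Rodrigues formula
`H_p(x) = (-1)^p * exp(x^2) * (d^p/dx^p) exp(-x^2)`. -/
noncomputable def hermiteH (p : ℕ) (x : ℝ) : ℝ :=
  (-1 : ℝ) ^ p * Real.exp (x ^ 2) * iteratedDeriv p (fun t : ℝ => Real.exp (-t ^ 2)) x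

/-- The physicists' Hermite polynomials as formal polynomials, given by the raising recursion. -/
noncomputable def physHermite : ℕ → Polynomial ℝ
  | 0 => 1
  | n + 1 => 2 * Polynomial.X * physHermite n - Polynomial.derivative (physHermite n)

lemma hasDerivAt_physHermite_mul_gaussian (n : ℕ) (x : ℝ) :
    HasDerivAt (fun t : ℝ => (physHermite n).eval t * Real.exp (-t ^ 2))
      (-((physHermite (n + 1)).eval x * Real.exp (-x ^ 2))) x := by
  have hg : HasDerivAt (fun t : ℝ => Real.exp (-t ^ 2))
      (Real.exp (-x ^ 2) * (-(2 * x))) x := by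
    simpa using ((hasDerivAt_pow 2 x).neg).exp
  refine (((physHermite n).hasDerivAt x).mul hg).congr_deriv ?_
  simp only [physHermite, Polynomial.eval_sub, Polynomial.eval_mul, Polynomial.eval_X,
    Polynomial.eval_ofNat]
  ring

lemma iteratedDeriv_gaussian (n : ℕ) :
    iteratedDeriv n (fun t : ℝ => Real.exp (-t ^ 2)) =
      fun x => (-1) ^ n * ((physHermite n).eval x * Real.exp (-x ^ 2)) := by
  induction n with
  | zero => simp [physHermite]
  | succ n ih =>
    rw [iteratedDeriv_succ, ih]
    ext x
    rw [((hasDerivAt_physHermite_mul_gaussian n x).const_mul ((-1 : ℝ) ^ n)).deriv]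
    ring

lemma hermiteH_eq_eval (n : ℕ) (x : ℝ) : hermiteH n x = (physHermite n).eval x := by
  have h1 : (-1 : ℝ) ^ n * (-1) ^ n = 1 := by rw [← mul_pow]; simp
  have h2 : Real.exp (x ^ 2) * Real.exp (-x ^ 2) = 1 := by rw [← Real.exp_add]; simp
  rw [hermiteH, iteratedDeriv_gaussian]
  calc _ = ((-1 : ℝ) ^ n * (-1) ^ n) * (Real.exp (x ^ 2) * Real.exp (-x ^ 2)) *
        (physHermite n).eval x := by ring
    _ = _ := by rw [h1, h2]; ring

lemma derivative_physHermite_succ (n : ℕ) :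
    Polynomial.derivative (physHermite (n + 1)) =
      Polynomial.C (2 * ((n : ℝ) + 1)) * physHermite n := by
  induction n with
  | zero => simp [physHermite, Polynomial.C_ofNat]
  | succ n ih =>
    have hdef : physHermite (n + 1) =
      2 * Polynomial.X * physHermite n - Polynomial.derivative (physHermite n) := rfl
    rw [show physHermite (n + 1 + 1) = 2 * Polynomial.X * physHermite (n + 1) -
      Polynomial.derivative (physHermite (n + 1)) from rfl]
    rw [Polynomial.derivative_sub, Polynomial.derivative_mul, ih, Polynomial.derivative_C_mul]
    simp only [Polynomial.derivative_mul, Polynomial.derivative_ofNat, Polynomial.derivative_X,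
      Polynomial.C_mul, Polynomial.C_add, Polynomial.C_1, Polynomial.C_ofNat, Nat.cast_add,
      Nat.cast_one]
    linear_combination (-2 * (Polynomial.C (n : ℝ) + 1)) * hdef

lemma integrable_polynomial_mul_gaussian (f : Polynomial ℝ) :
    Integrable (fun x : ℝ => f.eval x * Real.exp (-x ^ 2)) := by
  induction f using Polynomial.induction_on' with
  | add f g hf hg =>
    simp only [Polynomial.eval_add, add_mul]
    exact hf.add hg
  | monomial n a =>
    have h := integrable_rpow_mul_exp_neg_mul_sq (b := 1) one_pos (s := n)
      (by linarith [Nat.cast_nonneg (α := ℝ) n])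
    simpa [Polynomial.eval_monomial, mul_assoc] using h.const_mul a

/-- Against the Gaussian weight, raising the index of `physHermite` is adjoint to
differentiation. -/
lemma integral_mul_physHermite_succ (f : Polynomial ℝ) (n : ℕ) :
    ∫ x : ℝ, f.eval x * (physHermite (n + 1)).eval x * Real.exp (-x ^ 2) =
      ∫ x : ℝ, (Polynomial.derivative f).eval x * (physHermite n).eval x *
        Real.exp (-x ^ 2) := by
  have key := integral_mul_deriv_eq_deriv_mul_of_integrable
    (u := fun x => f.eval x) (u' := fun x => (Polynomial.derivative f).eval x)
    (v := fun t : ℝ => (physHermite n).eval t * Real.exp (-t ^ 2))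
    (v' := fun x => -((physHermite (n + 1)).eval x * Real.exp (-x ^ 2)))
    (fun x _ => f.hasDerivAt x) (fun x _ => hasDerivAt_physHermite_mul_gaussian n x)
    (by
      refine (integrable_polynomial_mul_gaussian (f * physHermite (n + 1))).neg.congr
        (.of_forall fun x => ?_)
      simp [mul_assoc])
    (by
      refine (integrable_polynomial_mul_gaussian
        (Polynomial.derivative f * physHermite n)).congr (.of_forall fun x => ?_)
      simp [mul_assoc])
    (by
      refine (integrable_polynomial_mul_gaussian (f * physHermite n)).congr
        (.of_forall fun x => ?_)
      simp [mul_assoc])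
  simp only [mul_neg, integral_neg, neg_inj] at key
  simpa only [mul_assoc] using key

lemma integral_physHermite_mul (p q : ℕ) :
    ∫ x : ℝ, (physHermite p).eval x * (physHermite q).eval x * Real.exp (-x ^ 2) =
      if p = q then 2 ^ p * (p.factorial : ℝ) * Real.sqrt π else 0 := by
  induction p generalizing q with
  | zero =>
    cases q with
    | zero => simpa [physHermite] using integral_gaussian 1
    | succ q =>
      rw [integral_mul_physHermite_succ]
      simp [physHermite]
  | succ p ih =>
    cases q with
    | zero =>
      simp_rw [mul_comm (Polynomial.eval _ (physHermite (p + 1)))]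
      rw [integral_mul_physHermite_succ]
      simp [physHermite]
    | succ q =>
      rw [integral_mul_physHermite_succ, derivative_physHermite_succ]
      simp only [Polynomial.eval_mul, Polynomial.eval_C, mul_assoc (2 * ((p : ℝ) + 1))]
      rw [integral_const_mul, ih]
      simp only [Nat.add_right_cancel_iff]
      split_ifs
      · rw [Nat.factorial_succ]
        push_cast
        ring
      · simp

/-- Orthogonality of the physicists' Hermite polynomials with Gaussian weight:
`∫ H_p(x) H_q(x) exp(-x²) dx = 2^p p! √π` if `p = q`, and `0` otherwise. -/
theorem hermiteH_orthogonal (p q : ℕ) :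
    ∫ x : ℝ, hermiteH p x * hermiteH q x * Real.exp (-x ^ 2) =
      if p = q then 2 ^ p * (p.factorial : ℝ) * Real.sqrt π else 0 := by
  simp only [hermiteH_eq_eval]
  exact integral_physHermite_mul p q
end
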